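/- Let (e_n) be a C-almost greedy basis of an infinite-dimensional separable Banach space X, i.e., ‖x − P_A(x)‖ ≤ C·σ̃_m(x) for all x ∈ X, m ∈ ℕ, and A ∈ G(x,m). Then for every x ∈ X, every m ∈ ℕ, every A ∈ G(x,m), and every integer 0 ≤ k ≤ m, one has ‖x − P_A(x)‖ ≤ C·σ̃_k(x). -/

import Mathlib

/-!
The coordinates `f n x` of any vector tend to `0`: this is clear on the span of the basis, and
passes to its closure because the functionals are uniformly bounded. Hence a set `B` of size
`k ≤ m` can be enlarged to a set of size `m` by adding `m - k` consecutive indices far from the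
origin, at a cost in `‖x - P_B x‖` that vanishes in the limit. This gives `σ̃_m(x) ≤ σ̃_k(x)`,
from which the claim is immediate.
-/

open Finset

noncomputable section

variable {𝕜 : Type*} [RCLike 𝕜] {X : Type*} [NormedAddCommGroup X] [NormedSpace 𝕜 X]

/-- The coordinate projection `P_A x = ∑_{n ∈ A} e_n^*(x) • e_n`. -/
def gproj (e : ℕ → X) (f : ℕ → X →L[𝕜] 𝕜) (A : Finset ℕ) (x : X) : X :=
  ∑ n ∈ A, f n x • e n

/-- `A` is a greedy set of `x` of order `m` (with respect to the functionals `f`):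
`|A| = m` and `min_{n ∈ A} |e_n^*(x)| ≥ sup_{n ∉ A} |e_n^*(x)|`. -/
def IsGreedySet (f : ℕ → X →L[𝕜] 𝕜) (x : X) (m : ℕ) (A : Finset ℕ) : Prop :=
  A.card = m ∧ ∀ a ∈ A, ∀ b ∉ A, ‖f b x‖ ≤ ‖f a x‖

/-- A semi-normalized basis of `X` together with its biorthogonal functionals:
the linear span of `(e_n)` is dense, `f_j (e_k) = δ_{jk}`, and both sequences are
semi-normalized. -/
structure SNBasis (e : ℕ → X) (f : ℕ → X →L[𝕜] 𝕜) : Prop where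
  dense_span : Dense (Submodule.span 𝕜 (Set.range e) : Set X)
  biorth : ∀ j k, f j (e k) = if j = k then 1 else 0
  semi_normalized : ∃ c₁ c₂ : ℝ, 0 < c₁ ∧
    ∀ n, c₁ ≤ ‖e n‖ ∧ c₁ ≤ ‖f n‖ ∧ ‖e n‖ ≤ c₂ ∧ ‖f n‖ ≤ c₂

/-- `σ̃_m(x) = inf {‖x - P_A x‖ : A ⊆ ℕ finite, |A| = m}`. -/
def sigmaTilde (e : ℕ → X) (f : ℕ → X →L[𝕜] 𝕜) (m : ℕ) (x : X) : ℝ :=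
  sInf {r | ∃ A : Finset ℕ, A.card = m ∧ r = ‖x - gproj e f A x‖}

/-- `σ̌_m(x) = inf {‖x - P_I x‖ : I an interval of consecutive integers, |I| = m}`. -/
def sigmaCheck (e : ℕ → X) (f : ℕ → X →L[𝕜] 𝕜) (m : ℕ) (x : X) : ℝ :=
  sInf {r | ∃ a : ℕ, r = ‖x - gproj e f (Finset.Ico a (a + m)) x‖}

lemma SNBasis.tendsto_coord {e : ℕ → X} {f : ℕ → X →L[𝕜] 𝕜} (hb : SNBasis e f) (x : X) :
    Filter.Tendsto (fun n => f n x) Filter.atTop (nhds 0) := by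
  have hspan : ∀ y ∈ Submodule.span 𝕜 (Set.range e),
      Filter.Tendsto (fun n => f n y) Filter.atTop (nhds 0) := by
    intro y hy
    induction hy using Submodule.span_induction with
    | mem y hy =>
      obtain ⟨k, rfl⟩ := hy
      refine tendsto_const_nhds.congr' ?_
      filter_upwards [Filter.eventually_gt_atTop k] with n hn
      rw [hb.biorth, if_neg hn.ne']
    | zero => simp
    | add y z _ _ hy hz => simpa using hy.add hz
    | smul a y _ hy => simpa using hy.const_mul a
  obtain ⟨c₁, c₂, hc₁, hc⟩ := hb.semi_normalized
  have hc₂ : 0 < c₂ := hc₁.trans_le ((hc 0).1.trans (hc 0).2.2.1)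
  rw [Metric.tendsto_atTop]
  intro ε hε
  obtain ⟨y, hy, hxy⟩ := hb.dense_span.exists_dist_lt x (show 0 < ε / 2 / c₂ by positivity)
  obtain ⟨N, hN⟩ := Metric.tendsto_atTop.1 (hspan y hy) (ε / 2) (by positivity)
  refine ⟨N, fun n hn => ?_⟩
  have h1 := hN n hn
  rw [dist_zero_right] at h1 ⊢
  rw [dist_eq_norm, lt_div_iff₀ hc₂] at hxy
  have h2 : ‖f n (x - y)‖ ≤ c₂ * ‖x - y‖ := (f n).le_of_opNorm_le (hc n).2.2.2 _
  have h3 : f n x = f n (x - y) + f n y := by simp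
  have h4 := norm_add_le (f n (x - y)) (f n y)
  rw [← h3] at h4
  linarith

/-- Projections onto `j` consecutive coordinates vanish as the block moves to infinity. -/
lemma SNBasis.tendsto_gproj_Ico {e : ℕ → X} {f : ℕ → X →L[𝕜] 𝕜} (hb : SNBasis e f) (x : X)
    (j : ℕ) :
    Filter.Tendsto (fun N => gproj e f (Ico N (N + j)) x) Filter.atTop (nhds 0) := by
  obtain ⟨c₁, c₂, -, hc⟩ := hb.semi_normalized
  have hterm : Filter.Tendsto (fun n => f n x • e n) Filter.atTop (nhds 0) := by
    refine squeeze_zero_norm (a := fun n => ‖f n x‖ * c₂) (fun n => ?_) ?_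
    · rw [norm_smul]
      exact mul_le_mul_of_nonneg_left (hc n).2.2.1 (norm_nonneg _)
    · simpa using (hb.tendsto_coord x).norm.mul_const c₂
  have hsum : Filter.Tendsto (fun N => ∑ i ∈ range j, f (N + i) x • e (N + i))
      Filter.atTop (nhds 0) := by
    simpa using tendsto_finsetSum (range j)
      fun i _ => hterm.comp (Filter.tendsto_add_atTop_nat i)
  refine hsum.congr fun N => ?_
  rw [gproj, sum_Ico_eq_sum_range, Nat.add_sub_cancel_left]

lemma sigmaTilde_le (e : ℕ → X) (f : ℕ → X →L[𝕜] 𝕜) (x : X) (A : Finset ℕ) :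
    sigmaTilde e f A.card x ≤ ‖x - gproj e f A x‖ :=
  csInf_le ⟨0, by rintro r ⟨B, -, rfl⟩; exact norm_nonneg _⟩ ⟨A, rfl, rfl⟩

lemma SNBasis.sigmaTilde_anti {e : ℕ → X} {f : ℕ → X →L[𝕜] 𝕜} (hb : SNBasis e f) (x : X)
    {k m : ℕ} (hkm : k ≤ m) : sigmaTilde e f m x ≤ sigmaTilde e f k x := by
  refine le_csInf ⟨_, range k, card_range k, rfl⟩ ?_
  rintro r ⟨B, hB, rfl⟩
  have hlim : Filter.Tendsto
      (fun N => ‖x - (gproj e f B x + gproj e f (Ico N (N + (m - k))) x)‖)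
      Filter.atTop (nhds ‖x - gproj e f B x‖) := by
    simpa using
      (((hb.tendsto_gproj_Ico x (m - k)).const_add (gproj e f B x)).const_sub x).norm
  refine ge_of_tendsto hlim ?_
  -- Beyond `B.sup id`, the added block is disjoint from `B`.
  filter_upwards [Filter.eventually_gt_atTop (B.sup id)] with N hN
  have hdisj : Disjoint B (Ico N (N + (m - k))) := by
    rw [disjoint_left]
    intro b hbB hbI
    have h1 : b ≤ B.sup id := le_sup (f := id) hbB
    have h2 := (mem_Ico.1 hbI).1
    omega
  have hcard : (B ∪ Ico N (N + (m - k))).card = m := by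
    rw [card_union_of_disjoint hdisj, Nat.card_Ico]
    omega
  have h := sigmaTilde_le e f x (B ∪ Ico N (N + (m - k)))
  rw [hcard] at h
  rwa [gproj, sum_union hdisj] at h

/-- a `C`-almost greedy basis satisfies
`‖x - P_A x‖ ≤ C ⬝ σ̃_k(x)` for every greedy set `A` of order `m` and every `k ≤ m`. -/
theorem stmt2 [CompleteSpace X] [TopologicalSpace.SeparableSpace X]
    (hinf : ¬FiniteDimensional 𝕜 X)
    (e : ℕ → X) (f : ℕ → X →L[𝕜] 𝕜) (hb : SNBasis e f) (C : ℝ) (hC : 1 ≤ C)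
    (hag : ∀ (x : X) (m : ℕ) (A : Finset ℕ), IsGreedySet f x m A →
      ‖x - gproj e f A x‖ ≤ C * sigmaTilde e f m x) :
    ∀ (x : X) (m : ℕ) (A : Finset ℕ), IsGreedySet f x m A →
      ∀ k ≤ m, ‖x - gproj e f A x‖ ≤ C * sigmaTilde e f k x := by
  intro x m A hA k hk
  exact (hag x m A hA).trans
    (mul_le_mul_of_nonneg_left (hb.sigmaTilde_anti x hk) (by linarith))
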